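/- Let q ∈ ℂ with 0 < |q| < 1 and let x, y, z ∈ ℂ with y ≠ 0, and x ≠ q^{-m}, z ≠ q^{-m} for every m ∈ ℕ (so that (x;q)_n ≠ 0 and (z;q)_n ≠ 0 for all n). Assume both series below converge absolutely. Then ∑_{n≥0} (z/y;q)_n (-1)^n q^{n(n-1)/2} x^n / ((q;q)_n (z;q)_n) = (x;q)_∞ · ∑_{n≥0} q^{n(n-1)} (y;q)_n (xz/y)^n / ((q;q)_n (x;q)_n (z;q)_n). -/

import Mathlib

/-- The finite q-shifted factorial `(a;q)_n = ∏_{k=0}^{n-1} (1 - a q^k)`. -/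
noncomputable def qPoch (a q : ℂ) (n : ℕ) : ℂ := ∏ k ∈ Finset.range n, (1 - a * q ^ k)

/-- The infinite q-shifted factorial `(a;q)_∞ = ∏_{k=0}^{∞} (1 - a q^k)`. -/
noncomputable def qPochInf (a q : ℂ) : ℂ := ∏' k : ℕ, (1 - a * q ^ k)

/-!
Write `w = z / y`. Euler's expansion of `(x q ^ n; q)_∞` in powers of `x q ^ n` turns the right-hand
side into a double series over `(n, m)`. Since `τ(n) τ(m) q ^ (n m) = τ(n + m)`, its terms with
`n + m = N` share the factor `τ(N) x ^ N`, and what remains of their sum is evaluated by the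
`q`-Chu–Vandermonde identity, giving the `N`-th term of the left-hand side.
-/

open Filter Finset Topology

section FiniteIdentities

variable {a c q t x : ℂ}

lemma qPoch_zero (a q : ℂ) : qPoch a q 0 = 1 := prod_range_zero _

lemma qPoch_succ (a q : ℂ) (n : ℕ) : qPoch a q (n + 1) = qPoch a q n * (1 - a * q ^ n) :=
  prod_range_succ _ n

lemma qPoch_succ' (a q : ℂ) (n : ℕ) : qPoch a q (n + 1) = (1 - a) * qPoch (a * q) q n := by
  simp only [qPoch, prod_range_succ', pow_zero, mul_one, pow_succ', mul_assoc, mul_comm]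

lemma qPoch_zero_left (q : ℂ) (n : ℕ) : qPoch 0 q n = 1 := by simp [qPoch]

lemma qPoch_ne_zero_of_ne_zpow (hx : ∀ m : ℕ, x ≠ q ^ (-(m : ℤ))) (n : ℕ) :
    qPoch x q n ≠ 0 := by
  refine prod_ne_zero_iff.mpr fun k _ h => hx k ?_
  rw [zpow_neg, zpow_natCast]
  exact eq_inv_of_mul_eq_one_left (sub_eq_zero.mp h).symm

lemma qPoch_self_ne_zero (hq : ‖q‖ < 1) (n : ℕ) : qPoch q q n ≠ 0 := by
  refine prod_ne_zero_iff.mpr fun k _ h => ?_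
  have hpow : q ^ (k + 1) = 1 := by rw [pow_succ', sub_eq_zero.mp h]
  have hlt : ‖q ^ (k + 1)‖ < 1 := by
    rw [norm_pow]
    exact pow_lt_one₀ (norm_nonneg q) hq k.succ_ne_zero
  simp [hpow] at hlt

/-- The factor `τ(n) = (-1) ^ n q ^ (n (n - 1) / 2)` of basic hypergeometric series. -/
noncomputable def qTau (q : ℂ) (n : ℕ) : ℂ := (-1) ^ n * q ^ (n * (n - 1) / 2)

lemma qTau_zero (q : ℂ) : qTau q 0 = 1 := by simp [qTau]

lemma qTau_succ (q : ℂ) (n : ℕ) : qTau q (n + 1) = -q ^ n * qTau q n := by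
  have hexp : (n + 1) * (n + 1 - 1) / 2 = n + n * (n - 1) / 2 := by
    rw [← Nat.choose_two_right, ← Nat.choose_two_right, Nat.choose_succ_succ' n 1,
      Nat.choose_one_right]
  rw [qTau, qTau, hexp]
  ring

lemma qTau_sq (q : ℂ) (n : ℕ) : qTau q n ^ 2 = q ^ (n * (n - 1)) := by
  rw [qTau, mul_pow, ← pow_mul, ← pow_mul, mul_comm n 2, (even_two_mul n).neg_one_pow, one_mul,
    Nat.div_mul_cancel (Nat.even_mul_pred_self n).two_dvd]

lemma qTau_add (q : ℂ) (n m : ℕ) : qTau q (n + m) = qTau q n * qTau q m * q ^ (n * m) := by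
  induction m with
  | zero => simp [qTau_zero]
  | succ m ih =>
    rw [← add_assoc, qTau_succ, qTau_succ, ih]
    ring

/-- The `n`-th term of the basic hypergeometric series `₁φ₁(a; c; q, t)`. All series here, including
Euler's series with `a = c = 0`, are written in terms of it. -/
noncomputable def phiTerm (a c q t : ℂ) (n : ℕ) : ℂ :=
  qPoch a q n * qTau q n * t ^ n / (qPoch q q n * qPoch c q n)

lemma phiTerm_zero (a c q t : ℂ) : phiTerm a c q t 0 = 1 := by
  simp [phiTerm, qPoch_zero, qTau_zero]

lemma phiTerm_succ (a c q t : ℂ) (n : ℕ) :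
    phiTerm a c q t (n + 1) =
      -q ^ n * (1 - a * q ^ n) * t / ((1 - q * q ^ n) * (1 - c * q ^ n)) * phiTerm a c q t n := by
  rw [phiTerm, phiTerm, div_mul_div_comm]
  simp only [qPoch_succ, qTau_succ]
  congr 1 <;> ring

lemma one_sub_mul_phiTerm_succ {n : ℕ} (hn : 1 - q * q ^ n ≠ 0) :
    (1 - q * q ^ n) * phiTerm a c q t (n + 1) =
      -q ^ n * t * (1 - a) / (1 - c) * phiTerm (a * q) (c * q) q t n := by
  simp only [phiTerm, qPoch_succ' a, qPoch_succ' c, qPoch_succ q, qTau_succ, pow_succ' t]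
  field_simp

lemma phiTerm_mul (a c q t s : ℂ) (n : ℕ) :
    phiTerm a c q (t * s) n = phiTerm a c q t n * s ^ n := by
  rw [phiTerm, phiTerm, mul_pow]
  ring

lemma one_sub_mul_pow_ne_zero (h : ∀ n, qPoch a q n ≠ 0) (n : ℕ) : 1 - a * q ^ n ≠ 0 :=
  right_ne_zero_of_mul (qPoch_succ a q n ▸ h (n + 1))

/- The factor `1 - q ^ (N + 1)` is split as `(1 - q ^ m) + q ^ m (1 - q ^ n)` on the terms with
`n + m = N + 1`; each part cancels a factor of one denominator. -/
lemma one_sub_mul_sum_antidiagonal_phiTerm (hq : ∀ n, qPoch q q n ≠ 0) (N : ℕ) :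
    (1 - q * q ^ N) * ∑ p ∈ antidiagonal (N + 1), phiTerm a c q t p.1 / qPoch q q p.2 =
      ∑ p ∈ antidiagonal N, phiTerm a c q t p.1 / qPoch q q p.2 -
        q ^ N * t * (1 - a) / (1 - c) *
          ∑ p ∈ antidiagonal N, phiTerm (a * q) (c * q) q t p.1 / qPoch q q p.2 := by
  have hsplit : ∀ p ∈ antidiagonal (N + 1),
      (1 - q * q ^ N) * (phiTerm a c q t p.1 / qPoch q q p.2) =
        (1 - q ^ p.2) * (phiTerm a c q t p.1 / qPoch q q p.2) +
          q ^ p.2 * (1 - q ^ p.1) * (phiTerm a c q t p.1 / qPoch q q p.2) := by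
    intro p hp
    rw [← pow_succ', ← mem_antidiagonal.mp hp]
    ring
  have hsnd : ∀ p : ℕ × ℕ,
      (1 - q ^ (p.2 + 1)) * (phiTerm a c q t p.1 / qPoch q q (p.2 + 1)) =
        phiTerm a c q t p.1 / qPoch q q p.2 := by
    intro p
    have := one_sub_mul_pow_ne_zero hq p.2
    rw [pow_succ', qPoch_succ]
    field_simp
  have hfst : ∀ p ∈ antidiagonal N,
      q ^ p.2 * (1 - q ^ (p.1 + 1)) * (phiTerm a c q t (p.1 + 1) / qPoch q q p.2) =
        -(q ^ N * t * (1 - a) / (1 - c)) *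
          (phiTerm (a * q) (c * q) q t p.1 / qPoch q q p.2) := by
    intro p hp
    have hshift := one_sub_mul_phiTerm_succ (a := a) (c := c) (t := t)
      (one_sub_mul_pow_ne_zero hq p.1)
    rw [pow_succ', ← mem_antidiagonal.mp hp]
    linear_combination q ^ p.2 / qPoch q q p.2 * hshift
  rw [mul_sum, sum_congr rfl hsplit, sum_add_distrib, Nat.sum_antidiagonal_succ',
    Nat.sum_antidiagonal_succ, sum_congr rfl fun p _ => hsnd p, sum_congr rfl hfst, ← mul_sum]
  simp only [pow_zero, sub_self, mul_zero, zero_mul, zero_add, neg_mul, sub_eq_add_neg]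

/- The `q`-Chu–Vandermonde identity `₂φ₁(q⁻ᴺ, a; t a; q, t q ^ N) = (t; q)_N / (t a; q)_N`, divided
by `(q; q)_N` so that it reads as a convolution. -/
theorem sum_antidiagonal_phiTerm_div_qPoch (hq : ∀ n, qPoch q q n ≠ 0)
    (hta : ∀ n, qPoch (t * a) q n ≠ 0) (N : ℕ) :
    ∑ p ∈ antidiagonal N, phiTerm a (t * a) q t p.1 / qPoch q q p.2 =
      qPoch t q N / (qPoch q q N * qPoch (t * a) q N) := by
  induction N generalizing a with
  | zero => simp [phiTerm_zero, qPoch_zero]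
  | succ N ih =>
    have hta₀ : 1 - t * a ≠ 0 := by simpa using one_sub_mul_pow_ne_zero hta 0
    have htaq : ∀ n, qPoch (t * (a * q)) q n ≠ 0 := fun n =>
      right_ne_zero_of_mul (mul_assoc t a q ▸ qPoch_succ' (t * a) q n ▸ hta (n + 1))
    have hqN := one_sub_mul_pow_ne_zero hq N
    have htaN := one_sub_mul_pow_ne_zero hta N
    have hshift : qPoch (t * a) q N * (1 - t * a * q ^ N) =
        (1 - t * a) * qPoch (t * (a * q)) q N := by
      rw [← qPoch_succ, qPoch_succ', mul_assoc t a q]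
    refine mul_left_cancel₀ hqN ?_
    rw [one_sub_mul_sum_antidiagonal_phiTerm hq, ih hta, mul_assoc t a q, ih htaq]
    calc
      _ = qPoch t q N / (qPoch q q N * qPoch (t * a) q N) - q ^ N * t * (1 - a) * qPoch t q N /
            (qPoch q q N * ((1 - t * a) * qPoch (t * (a * q)) q N)) := by
        field_simp [hta₀, htaq N]
      _ = qPoch t q N * (1 - t * q ^ N) /
            (qPoch q q N * (qPoch (t * a) q N * (1 - t * a * q ^ N))) := by
        rw [← hshift]
        field_simp [hq N, hta N, htaN]
        ring
      _ = (1 - q * q ^ N) *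
            (qPoch t q (N + 1) / (qPoch q q (N + 1) * qPoch (t * a) q (N + 1))) := by
        rw [qPoch_succ t, qPoch_succ q, qPoch_succ (t * a), mul_right_comm (qPoch q q N),
          mul_comm _ (1 - q * q ^ N), ← mul_div_assoc, mul_div_mul_left _ _ hqN]

end FiniteIdentities

section Convergence

variable {q : ℂ}

lemma summable_norm_of_succ_eq_mul {R : Type*} [SeminormedRing R] {f r : ℕ → R}
    (hr : Tendsto r atTop (𝓝 0)) (hf : ∀ n, f (n + 1) = r n * f n) : Summable fun n => ‖f n‖ := by
  refine summable_of_ratio_norm_eventually_le (r := 1 / 2) (by norm_num) ?_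
  filter_upwards [hr.norm.eventually_le_const (by simp : ‖(0 : R)‖ < 1 / 2)] with n hn
  rw [norm_norm, norm_norm, hf]
  exact (norm_mul_le _ _).trans (mul_le_mul_of_nonneg_right hn (norm_nonneg _))

lemma tsum_eq_tsum_sum_antidiagonal {A E : Type*} [AddCommMonoid A] [HasAntidiagonal A]
    [AddCommMonoid E] [TopologicalSpace E] [ContinuousAdd E] [T3Space E] {f : A × A → E}
    (hf : Summable f) : ∑' p, f p = ∑' n, ∑ p ∈ antidiagonal n, f p := by
  let e := HasAntidiagonal.sigmaAntidiagonalEquivProd (A := A)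
  calc
    ∑' p, f p = ∑' p : Σ n : A, antidiagonal n, f p.2 := (e.tsum_eq f).symm
    _ = ∑' (n : A) (p : antidiagonal n), f p :=
      Summable.tsum_sigma' (f := f ∘ e) (fun _ => (hasSum_fintype _).summable)
        (e.summable_iff.mpr hf)
    _ = ∑' n, ∑ p ∈ antidiagonal n, f p := tsum_congr fun n => Finset.tsum_subtype _ f

lemma multipliable_one_sub_mul_pow (hq : ‖q‖ < 1) (x : ℂ) :
    Multipliable fun k : ℕ => 1 - x * q ^ k := by
  have hs : Summable fun k : ℕ => ‖-(x * q ^ k)‖ := by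
    simpa only [norm_neg, norm_mul] using (summable_norm_geometric_of_norm_lt_one hq).mul_left ‖x‖
  simpa only [sub_eq_add_neg] using multipliable_one_add_of_summable hs

lemma tendsto_qPoch (hq : ‖q‖ < 1) (x : ℂ) : Tendsto (qPoch x q) atTop (𝓝 (qPochInf x q)) :=
  (multipliable_one_sub_mul_pow hq x).hasProd.tendsto_prod_nat

lemma qPoch_mul_qPochInf (hq : ‖q‖ < 1) (x : ℂ) (n : ℕ) :
    qPoch x q n * qPochInf (x * q ^ n) q = qPochInf x q := by
  have hpow : (fun k => 1 - x * q ^ n * q ^ k) = fun k => 1 - x * q ^ (k + n) := by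
    funext k
    ring
  have hm : Multipliable fun k => 1 - x * q ^ (k + n) :=
    hpow ▸ multipliable_one_sub_mul_pow hq (x * q ^ n)
  rw [qPochInf, hpow]
  exact Multipliable.prod_mul_tprod_nat_mul' (f := fun k => 1 - x * q ^ k) hm

lemma summable_norm_phiTerm (hq : ‖q‖ < 1) (a c t : ℂ) :
    Summable fun n => ‖phiTerm a c q t n‖ := by
  have hpow : Tendsto (fun n : ℕ => q ^ n) atTop (𝓝 0) :=
    tendsto_pow_atTop_nhds_zero_of_norm_lt_one hq
  have hsub : ∀ b : ℂ, Tendsto (fun n : ℕ => 1 - b * q ^ n) atTop (𝓝 1) := fun b => by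
    simpa using (hpow.const_mul b).const_sub 1
  refine summable_norm_of_succ_eq_mul ?_ (phiTerm_succ a c q t)
  simpa [Pi.div_def] using
    ((hpow.neg.mul (hsub a)).mul_const t).div ((hsub q).mul (hsub c)) (by simp)

lemma tendsto_qTau_mul_pow (hq : ‖q‖ < 1) (x : ℂ) :
    Tendsto (fun n => qTau q n * x ^ n) atTop (𝓝 0) := by
  have hpow : Tendsto (fun n : ℕ => -q ^ n * x) atTop (𝓝 0) := by
    simpa using (tendsto_pow_atTop_nhds_zero_of_norm_lt_one hq).neg.mul_const x
  refine (summable_norm_of_succ_eq_mul hpow fun n => ?_).of_norm.tendsto_atTop_zero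
  rw [qTau_succ]
  ring

lemma tsum_phiTerm_zero_zero_eq_one_sub_mul (hq : ‖q‖ < 1) (x : ℂ) :
    ∑' m, phiTerm 0 0 q x m = (1 - x) * ∑' m, phiTerm 0 0 q (x * q) m := by
  have hx := (summable_norm_phiTerm hq 0 0 x).of_norm
  have hxq := (summable_norm_phiTerm hq 0 0 (x * q)).of_norm
  have hstep : ∀ m, phiTerm 0 0 q x (m + 1) - phiTerm 0 0 q (x * q) (m + 1) =
      -x * phiTerm 0 0 q (x * q) m := by
    intro m
    have hshift := one_sub_mul_phiTerm_succ (a := 0) (c := 0) (t := x)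
      (one_sub_mul_pow_ne_zero (qPoch_self_ne_zero hq) m)
    simp only [zero_mul, sub_zero, mul_one, div_one] at hshift
    rw [phiTerm_mul, phiTerm_mul]
    linear_combination hshift
  have hdiff : ∑' m, (phiTerm 0 0 q x m - phiTerm 0 0 q (x * q) m) =
      -x * ∑' m, phiTerm 0 0 q (x * q) m := by
    rw [(hx.sub hxq).tsum_eq_zero_add, tsum_congr hstep, tsum_mul_left, phiTerm_zero, phiTerm_zero,
      sub_self, zero_add]
  rw [hx.tsum_sub hxq] at hdiff
  linear_combination hdiff

lemma norm_phiTerm_mul_pow_le (hq : ‖q‖ < 1) (a c t : ℂ) (n m : ℕ) :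
    ‖phiTerm a c q (t * q ^ n) m‖ ≤ ‖phiTerm a c q t m‖ := by
  rw [phiTerm_mul, norm_mul, norm_pow, norm_pow]
  exact mul_le_of_le_one_right (norm_nonneg _)
    (pow_le_one₀ (by positivity) (pow_le_one₀ (norm_nonneg q) hq.le))

lemma tendsto_tsum_phiTerm_mul_pow (hq : ‖q‖ < 1) (a c t : ℂ) :
    Tendsto (fun n : ℕ => ∑' m, phiTerm a c q (t * q ^ n) m) atTop (𝓝 1) := by
  have hlim : Tendsto (fun n : ℕ => t * q ^ n) atTop (𝓝 0) := by
    simpa using (tendsto_pow_atTop_nhds_zero_of_norm_lt_one hq).const_mul t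
  have hzero : ∑' m, phiTerm a c q 0 m = 1 := by
    rw [tsum_eq_single 0 fun m hm => by simp [phiTerm, hm], phiTerm_zero]
  rw [← hzero]
  refine tendsto_tsum_of_dominated_convergence (summable_norm_phiTerm hq a c t) (fun m => ?_)
    (.of_forall fun n m => norm_phiTerm_mul_pow_le hq a c t n m)
  exact ((hlim.pow m).const_mul _).div_const _

/- Both sides, as functions `F` of `x`, satisfy `F x = (1 - x) F (x q)` and `F (x q ^ n) → 1`. -/
theorem tsum_phiTerm_zero_zero (hq : ‖q‖ < 1) (x : ℂ) :
    ∑' m, phiTerm 0 0 q x m = qPochInf x q := by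
  have hiter : ∀ n, qPoch x q n * ∑' m, phiTerm 0 0 q (x * q ^ n) m =
      ∑' m, phiTerm 0 0 q x m := by
    intro n
    induction n with
    | zero => simp [qPoch_zero]
    | succ n ih =>
      rw [← ih, tsum_phiTerm_zero_zero_eq_one_sub_mul hq (x * q ^ n), qPoch_succ, pow_succ,
        mul_assoc x, mul_assoc (qPoch x q n)]
  have hlim := (tendsto_qPoch hq x).mul (tendsto_tsum_phiTerm_mul_pow hq 0 0 x)
  rw [mul_one] at hlim
  exact tendsto_nhds_unique (tendsto_const_nhds.congr fun n => (hiter n).symm) hlim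

end Convergence

section Transformation

variable {q : ℂ}

lemma summable_phiTerm_mul_phiTerm (hq : ‖q‖ < 1) (a c t x : ℂ) :
    Summable fun p : ℕ × ℕ =>
      phiTerm a c q t p.1 * (qTau q p.1 * x ^ p.1) * phiTerm 0 0 q (x * q ^ p.1) p.2 := by
  have hfst : Summable fun n => phiTerm a c q t n * (qTau q n * x ^ n) :=
    (summable_norm_phiTerm hq a c t).mul_tendsto_const
      (Nat.cofinite_eq_atTop ▸ tendsto_qTau_mul_pow hq x)
  refine .of_norm_bounded (hfst.norm.mul_of_nonneg (summable_norm_phiTerm hq 0 0 x)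
    (fun _ => norm_nonneg _) fun _ => norm_nonneg _) fun p => ?_
  rw [norm_mul]
  gcongr
  exact norm_phiTerm_mul_pow_le hq 0 0 x p.1 p.2

lemma sum_antidiagonal_phiTerm_mul_phiTerm {w y : ℂ} (hq : ∀ n, qPoch q q n ≠ 0)
    (hwy : ∀ n, qPoch (w * y) q n ≠ 0) (x : ℂ) (N : ℕ) :
    ∑ p ∈ antidiagonal N,
        phiTerm y (w * y) q w p.1 * (qTau q p.1 * x ^ p.1) * phiTerm 0 0 q (x * q ^ p.1) p.2 =
      phiTerm w (w * y) q x N := by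
  have hcollect : ∀ p ∈ antidiagonal N,
      phiTerm y (w * y) q w p.1 * (qTau q p.1 * x ^ p.1) * phiTerm 0 0 q (x * q ^ p.1) p.2 =
        qTau q N * x ^ N * (phiTerm y (w * y) q w p.1 / qPoch q q p.2) := by
    intro p hp
    rw [phiTerm_mul, phiTerm.eq_def 0 0, qPoch_zero_left, ← mem_antidiagonal.mp hp, qTau_add,
      pow_mul, pow_add]
    ring
  rw [sum_congr rfl hcollect, ← mul_sum, sum_antidiagonal_phiTerm_div_qPoch hq hwy, phiTerm]
  ring

lemma tsum_mul_qPochInf_mul_pow (hq : ‖q‖ < 1) {x : ℂ} (hx : ∀ n, qPoch x q n ≠ 0) (f : ℕ → ℂ) :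
    ∑' n, f n * qPochInf (x * q ^ n) q = qPochInf x q * ∑' n, f n / qPoch x q n := by
  rw [← tsum_mul_left]
  refine tsum_congr fun n => ?_
  rw [← qPoch_mul_qPochInf hq x n]
  have := hx n
  field_simp

theorem stmt16_general (hq : ‖q‖ < 1) (x w y : ℂ) (hwy : ∀ n, qPoch (w * y) q n ≠ 0) :
    ∑' n, phiTerm w (w * y) q x n =
      ∑' n, phiTerm y (w * y) q w n * (qTau q n * x ^ n) * qPochInf (x * q ^ n) q := by
  have hsum := summable_phiTerm_mul_phiTerm hq y (w * y) w x
  calc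
    ∑' N, phiTerm w (w * y) q x N
      = ∑' N, ∑ p ∈ antidiagonal N,
          phiTerm y (w * y) q w p.1 * (qTau q p.1 * x ^ p.1) * phiTerm 0 0 q (x * q ^ p.1) p.2 :=
        tsum_congr fun N =>
          (sum_antidiagonal_phiTerm_mul_phiTerm (qPoch_self_ne_zero hq) hwy x N).symm
    _ = ∑' n, ∑' m,
          phiTerm y (w * y) q w n * (qTau q n * x ^ n) * phiTerm 0 0 q (x * q ^ n) m := by
        rw [← tsum_eq_tsum_sum_antidiagonal hsum, hsum.tsum_prod]
    _ = ∑' n, phiTerm y (w * y) q w n * (qTau q n * x ^ n) * qPochInf (x * q ^ n) q := by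
        simp only [tsum_mul_left, tsum_phiTerm_zero_zero hq]

end Transformation

theorem stmt16 (q : ℂ) (hq0 : 0 < ‖q‖) (hq1 : ‖q‖ < 1)
    (x y z : ℂ) (hy : y ≠ 0)
    (hx : ∀ m : ℕ, x ≠ q ^ (-(m : ℤ))) (hz : ∀ m : ℕ, z ≠ q ^ (-(m : ℤ)))
    (h1 : Summable (fun n : ℕ => ‖qPoch (z / y) q n * (-1 : ℂ) ^ n *
      q ^ (n * (n - 1) / 2) * x ^ n / (qPoch q q n * qPoch z q n)‖))
    (h2 : Summable (fun n : ℕ => ‖q ^ (n * (n - 1)) * qPoch y q n *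
      (x * z / y) ^ n / (qPoch q q n * qPoch x q n * qPoch z q n)‖)) :
    ∑' n : ℕ, qPoch (z / y) q n * (-1 : ℂ) ^ n *
      q ^ (n * (n - 1) / 2) * x ^ n / (qPoch q q n * qPoch z q n)
    = qPochInf x q * ∑' n : ℕ, q ^ (n * (n - 1)) * qPoch y q n *
      (x * z / y) ^ n / (qPoch q q n * qPoch x q n * qPoch z q n) := by
  obtain ⟨w, rfl⟩ : ∃ w, z = w * y := ⟨z / y, (div_mul_cancel₀ z hy).symm⟩
  have hmain := (stmt16_general hq1 x w y (qPoch_ne_zero_of_ne_zpow hz)).trans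
    (tsum_mul_qPochInf_mul_pow hq1 (qPoch_ne_zero_of_ne_zpow hx) _)
  rw [mul_div_cancel_right₀ w hy]
  refine (tsum_congr fun n => ?_).trans (hmain.trans (congrArg _ (tsum_congr fun n => ?_)))
  · rw [phiTerm, qTau, mul_assoc (qPoch w q n)]
  · rw [phiTerm, ← qTau_sq, ← mul_assoc x w y, mul_div_cancel_right₀ (x * w) hy, mul_pow]
    ring
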